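/- arXiv:2002.11292 — 2 statements merged into one kernel-verified Lean document; each statement's English description precedes it below -/
import Mathlib

section
/- The family ψ = (ψ_n) is a chain map from C^{BR_U}_*(X;ℤ) to the coinvariant group chain complex C^{gp}_*(M;ℤ)_G, i.e. ψ_{n−1} ∘ ∂^{BR_U}_n = ∂^{gp}_n ∘ ψ_n for every integer n. -/
open FreeAbelianGroup
open scoped TensorProduct

namespace GAlex

variable {G M A : Type*} [Group G] [AddCommGroup M] [DistribMulAction Gᵐᵒᵖ M] [AddCommGroup A]

/-- The right action `m · g` of a group element `g : G` on `m : M`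
(coming from the right `ℤ[G]`-module structure on `M`). -/
def ract (m : M) (g : G) : M := MulOpposite.op g • m

variable (φ : G →* G)

/-- The operation `(m,g) ⊳ (n,h) = (mh + n(φ(h) − h), h⁻¹gh)` of the `G`-Alexander biquandle. -/
def under (x y : M × G) : M × G :=
  (ract x.1 y.2 + ract y.1 (φ y.2) - ract y.1 y.2, y.2⁻¹ * x.2 * y.2)

/-- The operation `(m,g) ⊚ (n,h) = (mφ(h), g)` of the `G`-Alexander biquandle. -/
def overOp (x y : M × G) : M × G := (ract x.1 (φ y.2), x.2)

/-- The face `g_{⟨p⟩}` (delete the `p`-th entry). -/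
def dGdel (n : ℕ) (p : Fin (n + 1)) (g : Fin (n + 1) → G) : Fin n → G :=
  fun j => g (p.succAbove j)

/-- The face `g_{⟨⊲p⟩}` (conjugate the first entries by `g p` and delete the `p`-th entry). -/
def dGconj (n : ℕ) (p : Fin (n + 1)) (g : Fin (n + 1) → G) : Fin n → G :=
  fun j => if (j : ℕ) < (p : ℕ) then (g p)⁻¹ * g j.castSucc * g p else g j.succ

/-- The face `m_{⟨p⟩}` (merge the two entries adjacent to position `p`;
for `p = 0` drop the first entry). -/
def dMmer (n : ℕ) (p : Fin (n + 1)) (m : Fin (n + 1) → M) : Fin n → M :=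
  fun j =>
    if (j : ℕ) + 1 < (p : ℕ) then m j.castSucc
    else if (j : ℕ) + 1 = (p : ℕ) then m j.castSucc + m j.succ
    else m j.succ

/-- The face `m_{⟨⊲p⟩}`. -/
def dMconj (n : ℕ) (p : Fin (n + 1)) (g : Fin (n + 1) → G) (m : Fin (n + 1) → M) : Fin n → M :=
  fun j =>
    if (j : ℕ) + 1 < (p : ℕ) then ract (m j.castSucc) (g p)
    else if (j : ℕ) + 1 = (p : ℕ) then ract (m j.castSucc) (g p) + ract (m j.succ) (φ (g p))
    else ract (m j.succ) (φ (g p))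

/-- The boundary map `∂^{BR_U}_{n+1} : C^{BR_U}_{n+1}(X;ℤ) → C^{BR_U}_n(X;ℤ)`
(the boundary `∂^{BR_U}_k` is `0` for `k ≤ 1`, which agrees with this formula at `n = 0`). -/
def dBRU (n : ℕ) :
    FreeAbelianGroup ((Fin (n + 1) → G) × (Fin (n + 1) → M)) →+
      FreeAbelianGroup ((Fin n → G) × (Fin n → M)) :=
  FreeAbelianGroup.lift fun x =>
    ∑ p : Fin (n + 1),
      (-1 : ℤ) ^ (p : ℕ) •
        (FreeAbelianGroup.of (dGdel n p x.1, dMmer n p x.2) -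
          FreeAbelianGroup.of (dGconj n p x.1, dMconj φ n p x.1 x.2))

/-- The birack boundary map `∂^{BR}_{n+1} : C^{BR}_{n+1}(X;ℤ) → C^{BR}_n(X;ℤ)`
for the `G`-Alexander biquandle `X = M × G` (with trivial `X`-set). -/
def dBR (n : ℕ) :
    FreeAbelianGroup (Fin (n + 1) → M × G) →+ FreeAbelianGroup (Fin n → M × G) :=
  FreeAbelianGroup.lift fun x =>
    ∑ p : Fin (n + 1),
      (-1 : ℤ) ^ (p : ℕ) •
        (FreeAbelianGroup.of (fun j => x (p.succAbove j)) -
          FreeAbelianGroup.of (fun j : Fin n =>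
            if (j : ℕ) < (p : ℕ) then under φ (x j.castSucc) (x p)
            else overOp φ (x j.succ) (x p)))

/-- `γ_n((m₁,g₁),…,(m_n,g_n)) = (g₁,…,g_n; m₁−m₂, …, m_{n−1}−m_n, m_n)`. -/
def gammaMap (n : ℕ) :
    FreeAbelianGroup (Fin n → M × G) →+ FreeAbelianGroup ((Fin n → G) × (Fin n → M)) :=
  FreeAbelianGroup.lift fun x =>
    FreeAbelianGroup.of
      (fun j => (x j).2,
       fun j => (x j).1 - if h : (j : ℕ) + 1 < n then (x ⟨(j : ℕ) + 1, h⟩).1 else 0)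

/-- `r_n(g₁,…,g_n; m₁,…,m_n) = ((m₁+⋯+m_n, g₁), (m₂+⋯+m_n, g₂), …, (m_n, g_n))`. -/
def rMap (n : ℕ) :
    FreeAbelianGroup ((Fin n → G) × (Fin n → M)) →+ FreeAbelianGroup (Fin n → M × G) :=
  FreeAbelianGroup.lift fun p =>
    FreeAbelianGroup.of fun j => ((∑ i ∈ Finset.Ici j, p.2 i), p.1 j)

/-- The boundary map `∂^{BR_U}_{d+1}` of `C^{BR_U}_*(X;ℤ)_X` (the version with `X`-set `X`,
whose degree-`d` chain group is free on `(1+d)`-tuples); it is `0` in degrees `≤ 1`. -/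
def dBRUX : (d : ℕ) →
    FreeAbelianGroup ((Fin (d + 2) → G) × (Fin (d + 2) → M)) →+
      FreeAbelianGroup ((Fin (d + 1) → G) × (Fin (d + 1) → M))
  | 0 => 0
  | d + 1 =>
    FreeAbelianGroup.lift fun x =>
      ∑ i : Fin (d + 2),
        (-1 : ℤ) ^ (i : ℕ) •
          (FreeAbelianGroup.of (dGdel (d + 2) i.succ x.1, dMmer (d + 2) i.succ x.2) -
            FreeAbelianGroup.of (dGconj (d + 2) i.succ x.1, dMconj φ (d + 2) i.succ x.1 x.2))

/-- The boundary map `∂^{BR}_{d+1}` of `C^{BR}_*(X;ℤ)_X` (the version with `X`-set `X`);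
it is `0` in degrees `≤ 1`. -/
def dBRX : (d : ℕ) →
    FreeAbelianGroup (Fin (d + 2) → M × G) →+ FreeAbelianGroup (Fin (d + 1) → M × G)
  | 0 => 0
  | d + 1 =>
    FreeAbelianGroup.lift fun x =>
      ∑ i : Fin (d + 2),
        (-1 : ℤ) ^ (i : ℕ) •
          (FreeAbelianGroup.of (fun j => x (i.succ.succAbove j)) -
            FreeAbelianGroup.of (fun j : Fin (d + 2) =>
              if (j : ℕ) < (i : ℕ) + 1 then under φ (x j.castSucc) (x i.succ)
              else overOp φ (x j.succ) (x i.succ)))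


/-- The subgroup of `G`-coinvariants relations in `C^{gp}_n(M;ℤ)`:
generated by all `(m₁g,…,m_ng) − (m₁,…,m_n)`. -/
def coinvSub (n : ℕ) : AddSubgroup (FreeAbelianGroup (Fin n → M)) :=
  AddSubgroup.closure
    {z | ∃ (m : Fin n → M) (g : G),
        z = FreeAbelianGroup.of (fun i => ract (m i) g) - FreeAbelianGroup.of m}

/-- The coinvariant group chain group `C^{gp}_n(M;ℤ)_G`. -/
abbrev CgpG (n : ℕ) : Type _ :=
  FreeAbelianGroup (Fin n → M) ⧸ coinvSub (G := G) (M := M) n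

/-- The group-homology boundary map `∂^{gp}_{n+1} : C^{gp}_{n+1}(M;ℤ) → C^{gp}_n(M;ℤ)`
(it is `0` in degrees `≤ 1`, which agrees with this formula at `n = 0`). -/
def dgp (n : ℕ) :
    FreeAbelianGroup (Fin (n + 1) → M) →+ FreeAbelianGroup (Fin n → M) :=
  FreeAbelianGroup.lift fun m =>
    (∑ p : Fin (n + 1), (-1 : ℤ) ^ (p : ℕ) • FreeAbelianGroup.of (dMmer n p m)) +
      (-1 : ℤ) ^ (n + 1) • FreeAbelianGroup.of fun j : Fin n => m j.castSucc

/-- `|k| = k₁ + ⋯ + k_n`. -/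
def wt {n : ℕ} (k : Fin n → Bool) : ℕ := ∑ i, if k i then 1 else 0

/-- `g_{k,i} = φ(g₀^{k₀} ⋯ g_i^{k_i}) · g_{i+1}^{k_{i+1}} ⋯ g_{n-1}^{k_{n-1}}`
(indices written `0`-based; the products are ordered). -/
def gki {n : ℕ} (g : Fin n → G) (k : Fin n → Bool) (i : Fin n) : G :=
  φ ((((List.finRange n).filter fun j => decide (j ≤ i)).map
        fun j => if k j then g j else 1).prod) *
    (((List.finRange n).filter fun j => decide (i < j)).map
        fun j => if k j then g j else 1).prod

/-- The value of `ψ` on a generator: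
`Σ_{k, k₀ = 0} (−1)^{|k|} (m₀ g_{k,0}, …, m_n g_{k,n})`, as an element of the free
abelian group (before passing to coinvariants). -/
def psiVal (n : ℕ) (x : (Fin (n + 1) → G) × (Fin (n + 1) → M)) :
    FreeAbelianGroup (Fin (n + 1) → M) :=
  ∑ k ∈ Finset.univ.filter fun k : Fin (n + 1) → Bool => k 0 = false,
    (-1 : ℤ) ^ wt k • FreeAbelianGroup.of fun i => ract (x.2 i) (gki φ x.1 k i)

/-- `ψ` as a homomorphism into the free abelian group (before coinvariants). -/
def psiFree (n : ℕ) :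
    FreeAbelianGroup ((Fin (n + 1) → G) × (Fin (n + 1) → M)) →+
      FreeAbelianGroup (Fin (n + 1) → M) :=
  FreeAbelianGroup.lift (psiVal φ n)

/-- The homomorphism `ψ : C^{BR_U} → C^{gp}(M;ℤ)_G`. -/
def psiG (n : ℕ) :
    FreeAbelianGroup ((Fin (n + 1) → G) × (Fin (n + 1) → M)) →+
      CgpG (G := G) (M := M) (n + 1) :=
  (QuotientAddGroup.mk' (coinvSub (G := G) (M := M) (n + 1))).comp (psiFree φ n)

/-- The homomorphism `ψ_{•,λ}`, sending a generator `x` to `ψ(x) ⊗ λ(x₁)` where `x₁` is the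
first `G`-entry of `x`. -/
noncomputable def psiLam (lam : G → A) (n : ℕ) :
    FreeAbelianGroup ((Fin (n + 1) → G) × (Fin (n + 1) → M)) →+
      TensorProduct ℤ (CgpG (G := G) (M := M) (n + 1)) A :=
  FreeAbelianGroup.lift fun x =>
    (QuotientAddGroup.mk' (coinvSub (G := G) (M := M) (n + 1)) (psiVal φ n x)) ⊗ₜ[ℤ]
      lam (x.1 0)

/-- `D^{gp}_n(M;ℤ)_G`: the image in the coinvariants of the subgroup generated by tuples
with a vanishing entry in a position `1 ≤ i ≤ n−1`. -/
def DgpGsub (n : ℕ) : AddSubgroup (CgpG (G := G) (M := M) n) :=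
  (AddSubgroup.closure
      {z : FreeAbelianGroup (Fin n → M) |
        ∃ (m : Fin n → M) (i : Fin n),
          (i : ℕ) + 1 < n ∧ m i = 0 ∧ z = FreeAbelianGroup.of m}).map
    (QuotientAddGroup.mk' (coinvSub (G := G) (M := M) n))

/-!
For `a : Fin n → G` put `w a i = φ(a₀ ⋯ a_i) · a_{i+1} ⋯ a_{n-1}`. This is a single ordered product,
that of the sequence with entries `φ(a_j)` for `j ≤ i` and `a_j` for `j > i`. Moving the `p`-th
factor to the front conjugates the factors before it, and `φ` does not see this conjugation because
its values are central. Hence merging the entries of `(m_i · w a i)_i` at `p` produces the same kind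
of tuple, for the face `⊲p` of `(a, m)`.

The summands of `ψ` are these tuples for `a_j = g_j^{k_j}`. For `p ≠ 0` the two values of `k_p`
yield the two faces at `p` of the birack boundary. For the faces that drop the first or the last
entry, flipping `k₁` (indices start at `0`), respectively the last bit, multiplies the whole tuple
by a group element, so the signed summands cancel among the coinvariants.
-/

theorem dGconj_eq_ite {n : ℕ} (p : Fin (n + 1)) (a : Fin (n + 1) → G) (j : Fin n) :
    dGconj n p a j =
      if j.castSucc < p then (a p)⁻¹ * dGdel n p a j * a p else dGdel n p a j := by
  by_cases h : j.castSucc < p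
  · have hjp : (j : ℕ) < p := h
    simp [dGconj, dGdel, Fin.succAbove_of_castSucc_lt _ _ h, h, hjp]
  · have hjp : ¬(j : ℕ) < p := h
    simp [dGconj, dGdel, Fin.succAbove_of_le_castSucc _ _ (not_lt.1 h), h, hjp]

theorem dGconj_zero {n : ℕ} (a : Fin (n + 1) → G) : dGconj n 0 a = dGdel n 0 a := by
  funext j
  simp [dGconj, dGdel]

theorem dGconj_of_eq_one {n : ℕ} {p : Fin (n + 1)} {a : Fin (n + 1) → G} (ha : a p = 1) :
    dGconj n p a = dGdel n p a := by
  funext j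
  simp [dGconj_eq_ite, ha]

theorem mul_prod_ofFn_dGconj {n : ℕ} (a : Fin (n + 1) → G) (p : Fin (n + 1)) :
    a p * (List.ofFn (dGconj n p a)).prod = (List.ofFn a).prod := by
  induction n with
  | zero => simp [Fin.fin_one_eq_zero p]
  | succ n ih =>
    cases p using Fin.cases with
    | zero => simp [dGconj, List.ofFn_succ]
    | succ q =>
      have htail : (fun j : Fin n => dGconj (n + 1) q.succ a j.succ) =
          dGconj n q fun j => a j.succ := by
        funext j
        simp [dGconj]
      rw [List.ofFn_succ, List.prod_cons, htail, List.ofFn_succ (f := a), List.prod_cons,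
        ← ih (fun j => a j.succ) q]
      simp [dGconj, mul_assoc]

theorem inv_mul_mul_of_mem_center {z : G} (hz : z ∈ Subgroup.center G) (c : G) :
    c⁻¹ * z * c = z := by
  rw [mul_assoc, ← Subgroup.mem_center_iff.1 hz, inv_mul_cancel_left]

theorem map_conj_of_mem_center {H : Type*} [Group H] {f : G →* H} {a : G}
    (ha : f a ∈ Subgroup.center H) (c : G) : f (c⁻¹ * a * c) = f a := by
  rw [map_mul, map_mul, map_inv, inv_mul_mul_of_mem_center ha]

/-- The sequence `φ(a₀), …, φ(a_i), a_{i+1}, …, a_{n-1}`, the factors of `twistedProd`. -/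
def twist {n : ℕ} (a : Fin n → G) (i : Fin n) : Fin n → G :=
  fun j => if j ≤ i then φ (a j) else a j

/-- The element `φ(a₀ ⋯ a_i) · a_{i+1} ⋯ a_{n-1}`, encoded as one ordered product. -/
def twistedProd {n : ℕ} (a : Fin n → G) (i : Fin n) : G :=
  (List.ofFn (twist φ a i)).prod

theorem dGconj_twist_castSucc {φ : G →* G} (hφ : ∀ g, φ g ∈ Subgroup.center G) {n : ℕ}
    {p : Fin (n + 1)} {j : Fin n} (h : j.castSucc < p) (a : Fin (n + 1) → G) :
    dGconj n p (twist φ a j.castSucc) = twist φ (dGconj n p a) j := by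
  funext l
  by_cases hl : l ≤ j
  · have hlp : (l : ℕ) < p := lt_of_le_of_lt hl h
    simp [dGconj, twist, hl, hlp, inv_mul_mul_of_mem_center (hφ _), map_conj_of_mem_center (hφ _)]
  · have hl' : ¬l.succ ≤ j.castSucc := fun hle => hl (Nat.le_of_succ_le hle)
    simp [dGconj, twist, hl, hl', h.not_ge]

theorem dGconj_twist_succ {n : ℕ} {p : Fin (n + 1)} {j : Fin n} (h : p ≤ j.succ)
    (a : Fin (n + 1) → G) :
    dGconj n p (twist φ a j.succ) = twist φ (dGconj n p a) j := by
  funext l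
  by_cases hlp : (l : ℕ) < p
  · have hlj : l ≤ j := Nat.le_of_lt_succ (hlp.trans_le h)
    have hlj' : l.castSucc ≤ j.succ := Nat.le_succ_of_le hlj
    simp [dGconj, twist, hlp, hlj, hlj', h]
  · simp [dGconj, twist, hlp]

theorem twistedProd_castSucc_of_lt {φ : G →* G} (hφ : ∀ g, φ g ∈ Subgroup.center G) {n : ℕ}
    {p : Fin (n + 1)} {j : Fin n} (h : j.castSucc < p) (a : Fin (n + 1) → G) :
    twistedProd φ a j.castSucc = a p * twistedProd φ (dGconj n p a) j := by
  rw [twistedProd, ← mul_prod_ofFn_dGconj _ p, dGconj_twist_castSucc hφ h, ← twistedProd, twist,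
    if_neg h.not_ge]

theorem twistedProd_succ_of_le {n : ℕ} {p : Fin (n + 1)} {j : Fin n} (h : p ≤ j.succ)
    (a : Fin (n + 1) → G) :
    twistedProd φ a j.succ = φ (a p) * twistedProd φ (dGconj n p a) j := by
  rw [twistedProd, ← mul_prod_ofFn_dGconj _ p, dGconj_twist_succ φ h, ← twistedProd, twist,
    if_pos h]

theorem twistedProd_dGconj_of_le {φ : G →* G} (hφ : ∀ g, φ g ∈ Subgroup.center G) {n : ℕ}
    {p : Fin (n + 1)} {j : Fin n} (h : p ≤ j.succ) (a : Fin (n + 1) → G) :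
    twistedProd φ (dGconj n p a) j = twistedProd φ (dGdel n p a) j := by
  suffices twist φ (dGconj n p a) j = twist φ (dGdel n p a) j by rw [twistedProd, this, twistedProd]
  funext l
  by_cases hlp : l.castSucc < p
  · have hlj : l ≤ j := Nat.le_of_lt_succ (lt_of_lt_of_le hlp h)
    simp [twist, hlj, dGconj_eq_ite, hlp, map_conj_of_mem_center (hφ _)]
  · simp [twist, dGconj_eq_ite, hlp]

theorem twistedProd_castSucc {n : ℕ} (a : Fin (n + 1) → G) (j : Fin n) :
    twistedProd φ a j.castSucc = twistedProd φ (dGdel n (Fin.last n) a) j * a (Fin.last n) := by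
  have hlast : ¬Fin.last n ≤ j.castSucc := (Fin.castSucc_lt_last j).not_ge
  have hinit : (fun i : Fin n => twist φ a j.castSucc i.castSucc) =
      twist φ (dGdel n (Fin.last n) a) j := by
    funext i
    simp [twist, dGdel]
  rw [twistedProd, List.ofFn_succ_last, List.prod_append, List.prod_singleton, hinit, ← twistedProd,
    twist, if_neg hlast]

theorem ract_ract (m : M) (a b : G) : ract (ract m a) b = ract m (a * b) := by
  simp [ract, mul_smul]

theorem ract_one (m : M) : ract m (1 : G) = m := by simp [ract]

theorem ract_add (m m' : M) (a : G) : ract (m + m') a = ract m a + ract m' a := by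
  simp [ract]

/-- The tuple `(m_i · φ(a₀ ⋯ a_i) a_{i+1} ⋯ a_{n-1})_i`; for `a = g^k` these are the summands
of `ψ` on `(g, m)`. -/
def twistedTuple {n : ℕ} (a : Fin n → G) (m : Fin n → M) : Fin n → M :=
  fun i => ract (m i) (twistedProd φ a i)

theorem dMconj_of_eq_one {n : ℕ} {p : Fin (n + 1)} {a : Fin (n + 1) → G} (ha : a p = 1)
    (m : Fin (n + 1) → M) : dMconj φ n p a m = dMmer n p m := by
  funext j
  simp [dMconj, dMmer, ha, ract_one]

theorem twistedTuple_dMconj_zero {φ : G →* G} (hφ : ∀ g, φ g ∈ Subgroup.center G) {n : ℕ}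
    (a : Fin n → G) (g : Fin (n + 1) → G) (m : Fin (n + 1) → M) :
    twistedTuple φ a (dMconj φ n 0 g m) =
      fun i => ract (twistedTuple φ a (dMmer n 0 m) i) (φ (g 0)) := by
  funext i
  simp [twistedTuple, dMconj, dMmer, ract_ract, Subgroup.mem_center_iff.1 (hφ (g 0))]

theorem dMmer_twistedTuple {φ : G →* G} (hφ : ∀ g, φ g ∈ Subgroup.center G) {n : ℕ}
    (p : Fin (n + 1)) (a : Fin (n + 1) → G) (m : Fin (n + 1) → M) :
    dMmer n p (twistedTuple φ a m) = twistedTuple φ (dGconj n p a) (dMconj φ n p a m) := by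
  funext j
  have hcast (h : (j : ℕ) < p) : ract (m j.castSucc) (twistedProd φ a j.castSucc) =
      ract (ract (m j.castSucc) (a p)) (twistedProd φ (dGconj n p a) j) := by
    rw [twistedProd_castSucc_of_lt hφ h, ract_ract]
  have hsucc (h : (p : ℕ) ≤ j + 1) : ract (m j.succ) (twistedProd φ a j.succ) =
      ract (ract (m j.succ) (φ (a p))) (twistedProd φ (dGconj n p a) j) := by
    rw [twistedProd_succ_of_le φ h, ract_ract]
  simp only [dMmer, dMconj, twistedTuple]
  split_ifs with hlt heq
  · exact hcast (by omega)
  · rw [hcast (by omega), hsucc heq.ge, ract_add]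
  · exact hsucc (by omega)

theorem dMmer_zero_twistedTuple {φ : G →* G} (hφ : ∀ g, φ g ∈ Subgroup.center G) {n : ℕ}
    (a : Fin (n + 2) → G) (m : Fin (n + 2) → M) :
    dMmer (n + 1) 0 (twistedTuple φ a m) =
      fun i => ract (twistedTuple φ (dGdel (n + 1) 1 a) (dMmer (n + 1) 0 m) i) (φ (a 1)) := by
  funext i
  have h1 : (1 : Fin (n + 2)) ≤ i.succ := by simp [Fin.le_def]
  have hcomm := Subgroup.mem_center_iff.1 (hφ (a 1))
  simp only [dMmer, twistedTuple]
  simp [ract_ract, twistedProd_succ_of_le φ h1, twistedProd_dGconj_of_le hφ h1, hcomm]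

theorem twistedTuple_castSucc {n : ℕ} (a : Fin (n + 1) → G) (m : Fin (n + 1) → M) (i : Fin n) :
    twistedTuple φ a m i.castSucc =
      ract (twistedTuple φ (dGdel n (Fin.last n) a) (dGdel n (Fin.last n) m) i)
        (a (Fin.last n)) := by
  simp [twistedTuple, twistedProd_castSucc, ract_ract, dGdel]

/-- The sequence `g₀^{k₀}, …, g_{n-1}^{k_{n-1}}` for exponents `k_j ∈ {0, 1}`, encoded as
booleans; it is the input from which `ψ` forms its summand of index `k`. -/
def boolPow {n : ℕ} (g : Fin n → G) (k : Fin n → Bool) : Fin n → G :=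
  fun j => if k j then g j else 1

theorem filter_le_append_filter_lt {α : Type*} [LinearOrder α] (i : α) {l : List α}
    (hl : l.Pairwise (· ≤ ·)) :
    (l.filter fun j => decide (j ≤ i)) ++ (l.filter fun j => decide (i < j)) = l := by
  induction l with
  | nil => rfl
  | cons x l ih =>
    obtain ⟨hx, hl⟩ := List.pairwise_cons.1 hl
    by_cases hxi : x ≤ i
    · simpa [hxi, hxi.not_gt] using ih hl
    · have hi : ∀ y ∈ l, i < y := fun y hy => (not_le.1 hxi).trans_le (hx y hy)
      simp only [hxi, not_le.1 hxi, decide_true, decide_false, List.filter_cons_of_pos,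
        Bool.false_eq_true, not_false_eq_true, List.filter_cons_of_neg]
      rw [List.filter_eq_nil_iff.2 fun y hy => by simpa using hi y hy,
        List.filter_eq_self.2 fun y hy => by simpa using hi y hy, List.nil_append]

theorem gki_eq_twistedProd {n : ℕ} (g : Fin n → G) (k : Fin n → Bool) (i : Fin n) :
    gki φ g k i = twistedProd φ (boolPow g k) i := by
  rw [twistedProd, List.ofFn_eq_map,
    ← filter_le_append_filter_lt i ((List.pairwise_lt_finRange n).imp le_of_lt), List.map_append,
    List.prod_append, gki, map_list_prod, List.map_map]
  congr 2 <;> refine List.map_congr_left fun j hj => ?_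
  · have hji : j ≤ i := by simpa using hj
    simp [twist, boolPow, hji]
  · have hij : i < j := by simpa using hj
    simp [twist, boolPow, hij.not_ge]

theorem dGdel_boolPow_insertNth {n : ℕ} (p : Fin (n + 1)) (g : Fin (n + 1) → G) (b : Bool)
    (k : Fin n → Bool) :
    dGdel n p (boolPow g (p.insertNth b k)) = boolPow (dGdel n p g) k := by
  funext j
  simp [dGdel, boolPow]

theorem dGconj_boolPow_insertNth_true {n : ℕ} (p : Fin (n + 1)) (g : Fin (n + 1) → G)
    (k : Fin n → Bool) :
    dGconj n p (boolPow g (p.insertNth true k)) = boolPow (dGconj n p g) k := by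
  funext j
  rw [dGconj_eq_ite, dGdel_boolPow_insertNth]
  cases hk : k j <;> simp [boolPow, dGconj_eq_ite, hk]

theorem dMmer_twistedTuple_insertNth_false {φ : G →* G} (hφ : ∀ g, φ g ∈ Subgroup.center G)
    {n : ℕ} (p : Fin (n + 1)) (g : Fin (n + 1) → G) (m : Fin (n + 1) → M) (k : Fin n → Bool) :
    dMmer n p (twistedTuple φ (boolPow g (p.insertNth false k)) m) =
      twistedTuple φ (boolPow (dGdel n p g) k) (dMmer n p m) := by
  have hp : boolPow g (p.insertNth false k) p = 1 := by simp [boolPow]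
  rw [dMmer_twistedTuple hφ, dGconj_of_eq_one hp, dGdel_boolPow_insertNth, dMconj_of_eq_one φ hp]

theorem dMmer_twistedTuple_insertNth_true {φ : G →* G} (hφ : ∀ g, φ g ∈ Subgroup.center G)
    {n : ℕ} (p : Fin (n + 1)) (g : Fin (n + 1) → G) (m : Fin (n + 1) → M) (k : Fin n → Bool) :
    dMmer n p (twistedTuple φ (boolPow g (p.insertNth true k)) m) =
      twistedTuple φ (boolPow (dGconj n p g) k) (dMconj φ n p g m) := by
  have hp : boolPow g (p.insertNth true k) p = g p := by simp [boolPow]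
  have hm : dMconj φ n p (boolPow g (p.insertNth true k)) m = dMconj φ n p g m := by
    funext j
    simp only [dMconj, hp]
  rw [dMmer_twistedTuple hφ, dGconj_boolPow_insertNth_true, hm]

section CubeSum

variable {B : Type*} [AddCommGroup B]

/-- The signed sum `F ↦ ∑ (-1)^{|k|} F(k)` over the bit vectors `k` with first bit `0`, that is,
over the index set `K` of `ψ`. -/
def cubeSum (n : ℕ) : ((Fin (n + 1) → Bool) → B) →+ B :=
  ∑ k : Fin (n + 1) → Bool with k 0 = false, (-1 : ℤ) ^ wt k • Pi.evalAddMonoidHom (fun _ => B) k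

theorem cubeSum_apply {n : ℕ} (F : (Fin (n + 1) → Bool) → B) :
    cubeSum n F = ∑ k with k 0 = false, (-1 : ℤ) ^ wt k • F k := by
  simp [cubeSum]

theorem map_cubeSum {C : Type*} [AddCommGroup C] {n : ℕ} (f : B →+ C)
    (F : (Fin (n + 1) → Bool) → B) : f (cubeSum n F) = cubeSum n fun k => f (F k) := by
  simp only [cubeSum_apply, map_sum, map_zsmul]

theorem wt_insertNth {n : ℕ} (p : Fin (n + 1)) (b : Bool) (k : Fin n → Bool) :
    wt (p.insertNth b k : Fin (n + 1) → Bool) = (if b then 1 else 0) + wt k := by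
  simp [wt, Fin.sum_univ_succAbove _ p]

theorem insertNth_zero_of_ne_zero {α : Type*} {n : ℕ} {p : Fin (n + 2)} (hp : p ≠ 0) (b : α)
    (k : Fin (n + 1) → α) : (p.insertNth b k : Fin (n + 2) → α) 0 = k 0 := by
  rw [← Fin.succAbove_ne_zero_zero hp, Fin.insertNth_apply_succAbove]

theorem cubeSum_succ_eq_insertNth {n : ℕ} {p : Fin (n + 2)} (hp : p ≠ 0)
    (F : (Fin (n + 2) → Bool) → B) :
    cubeSum (n + 1) F =
      cubeSum n (fun k => F (p.insertNth false k)) - cubeSum n fun k => F (p.insertNth true k) := by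
  have hval (b : Bool) (k : Fin (n + 1) → Bool) :
      Fin.insertNthEquiv (fun _ => Bool) p (b, k) = p.insertNth b k := rfl
  simp only [cubeSum_apply, Finset.sum_filter]
  rw [← (Fin.insertNthEquiv (fun _ => Bool) p).sum_comp, Fintype.sum_prod_type, Fintype.sum_bool,
    add_comm, sub_eq_add_neg, ← Finset.sum_neg_distrib]
  simp only [hval, insertNth_zero_of_ne_zero hp, wt_insertNth]
  congr 1 <;> refine Finset.sum_congr rfl fun k _ => ?_
  · simp
  · split_ifs <;> simp [pow_add]

theorem cubeSum_succ_eq_zero {n : ℕ} {p : Fin (n + 2)} (hp : p ≠ 0) {F : (Fin (n + 2) → Bool) → B}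
    (hF : ∀ k, F (p.insertNth false k) = F (p.insertNth true k)) : cubeSum (n + 1) F = 0 := by
  rw [cubeSum_succ_eq_insertNth hp, funext hF, sub_self]

end CubeSum

variable (G) in
/-- The class of the generator `m` in the coinvariants `C^{gp}_n(M;ℤ)_G`; `G` is explicit because
`m` does not determine it. -/
def coinvClass {n : ℕ} (m : Fin n → M) : CgpG (G := G) (M := M) n :=
  QuotientAddGroup.mk' (coinvSub n) (of m)

theorem coinvClass_ract {n : ℕ} (m : Fin n → M) (c : G) :
    coinvClass G (fun i => ract (m i) c) = coinvClass G m := by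
  rw [coinvClass, coinvClass, ← sub_eq_zero, ← map_sub]
  exact (QuotientAddGroup.eq_zero_iff _).2 (AddSubgroup.subset_closure ⟨m, c, rfl⟩)

theorem psiFree_of {n : ℕ} (g : Fin (n + 1) → G) (m : Fin (n + 1) → M) :
    psiFree φ n (of (g, m)) = cubeSum n fun k => of (twistedTuple φ (boolPow g k) m) := by
  simp only [psiFree, lift_apply_of, psiVal, gki_eq_twistedProd, cubeSum_apply]
  rfl

theorem psiG_of {n : ℕ} (g : Fin (n + 1) → G) (m : Fin (n + 1) → M) :
    psiG φ n (of (g, m)) = cubeSum n fun k => coinvClass G (twistedTuple φ (boolPow g k) m) := by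
  rw [psiG, AddMonoidHom.comp_apply, psiFree_of, map_cubeSum]
  rfl

theorem psiG_dBRU_of {n : ℕ} (g : Fin (n + 2) → G) (m : Fin (n + 2) → M) :
    psiG φ n (dBRU φ (n + 1) (of (g, m))) =
      ∑ p : Fin (n + 2), (-1 : ℤ) ^ (p : ℕ) •
        (psiG φ n (of (dGdel (n + 1) p g, dMmer (n + 1) p m)) -
          psiG φ n (of (dGconj (n + 1) p g, dMconj φ (n + 1) p g m))) := by
  simp only [dBRU, lift_apply_of, map_sum, map_zsmul, map_sub]

theorem mk_dgp_of {n : ℕ} (m : Fin (n + 1) → M) :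
    QuotientAddGroup.mk' (coinvSub (G := G) n) (dgp n (of m)) =
      ∑ p : Fin (n + 1), (-1 : ℤ) ^ (p : ℕ) • coinvClass G (dMmer n p m) +
        (-1 : ℤ) ^ (n + 1) • coinvClass G fun j => m j.castSucc := by
  simp only [dgp, lift_apply_of, map_add, map_sum, map_zsmul, coinvClass]

theorem mk_dgp_psiFree_of {n : ℕ} (g : Fin (n + 2) → G) (m : Fin (n + 2) → M) :
    QuotientAddGroup.mk' (coinvSub (G := G) (n + 1)) (dgp (n + 1) (psiFree φ (n + 1) (of (g, m)))) =
      ∑ p : Fin (n + 2), (-1 : ℤ) ^ (p : ℕ) •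
        cubeSum (n + 1) (fun k =>
          coinvClass G (dMmer (n + 1) p (twistedTuple φ (boolPow g k) m))) +
        (-1 : ℤ) ^ (n + 2) • cubeSum (n + 1) fun k =>
          coinvClass G fun j : Fin (n + 1) => twistedTuple φ (boolPow g k) m j.castSucc := by
  simp only [psiFree_of, map_cubeSum, mk_dgp_of, ← map_zsmul, ← map_sum, ← map_add]
  congr 1
  funext k
  simp

theorem cubeSum_coinvClass_dMmer_of_ne_zero {φ : G →* G} (hφ : ∀ g, φ g ∈ Subgroup.center G) {n : ℕ}
    {p : Fin (n + 2)} (hp : p ≠ 0) (g : Fin (n + 2) → G) (m : Fin (n + 2) → M) :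
    cubeSum (n + 1) (fun k =>
        coinvClass G (dMmer (n + 1) p (twistedTuple φ (boolPow g k) m))) =
      psiG φ n (of (dGdel (n + 1) p g, dMmer (n + 1) p m)) -
        psiG φ n (of (dGconj (n + 1) p g, dMconj φ (n + 1) p g m)) := by
  simp only [cubeSum_succ_eq_insertNth hp, dMmer_twistedTuple_insertNth_false hφ,
    dMmer_twistedTuple_insertNth_true hφ, psiG_of]

theorem cubeSum_coinvClass_dMmer_zero {φ : G →* G} (hφ : ∀ g, φ g ∈ Subgroup.center G) {n : ℕ}
    (g : Fin (n + 2) → G) (m : Fin (n + 2) → M) :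
    cubeSum (n + 1) (fun k =>
      coinvClass G (dMmer (n + 1) 0 (twistedTuple φ (boolPow g k) m))) = 0 := by
  refine cubeSum_succ_eq_zero (p := 1) one_ne_zero fun k => ?_
  simp only [dMmer_zero_twistedTuple hφ, coinvClass_ract, dGdel_boolPow_insertNth]

theorem cubeSum_coinvClass_castSucc {n : ℕ} (g : Fin (n + 2) → G) (m : Fin (n + 2) → M) :
    cubeSum (n + 1) (fun k => coinvClass G fun j : Fin (n + 1) =>
      twistedTuple φ (boolPow g k) m j.castSucc) = 0 := by
  refine cubeSum_succ_eq_zero Fin.last_pos.ne' fun k => ?_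
  simp only [twistedTuple_castSucc, coinvClass_ract, dGdel_boolPow_insertNth]

theorem psiG_dMconj_zero {φ : G →* G} (hφ : ∀ g, φ g ∈ Subgroup.center G) {n : ℕ}
    (g : Fin (n + 2) → G) (m : Fin (n + 2) → M) :
    psiG φ n (of (dGconj (n + 1) 0 g, dMconj φ (n + 1) 0 g m)) =
      psiG φ n (of (dGdel (n + 1) 0 g, dMmer (n + 1) 0 m)) := by
  simp only [psiG_of, dGconj_zero, twistedTuple_dMconj_zero hφ, coinvClass_ract]

/-- `ψ = (ψ_n)` is a chain map from `C^{BR_U}_*(X;ℤ)` to the coinvariant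
group chain complex `C^{gp}_*(M;ℤ)_G`: `ψ_{n-1} ∘ ∂^{BR_U}_n = ∂^{gp}_n ∘ ψ_n`.
(The right-hand side is expressed through representatives: since `ψ` is the composite of
`ψ` into the free group with the projection to coinvariants, and the boundary of the
coinvariant complex is induced by `∂^{gp}`, the map `∂^{gp}_n ∘ ψ_n` equals the projection
of `∂^{gp}_n ∘ ψ_n^{free}`.) -/
theorem psi_chainMap (hφ : ∀ g : G, φ g ∈ Subgroup.center G) :
    ∀ n : ℕ,
      (psiG φ n).comp (dBRU (M := M) φ (n + 1)) =
        ((QuotientAddGroup.mk' (coinvSub (G := G) (M := M) (n + 1))).comp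
            (dgp (M := M) (n + 1))).comp (psiFree φ (n + 1)) := by
  intro n
  ext ⟨g, m⟩
  have faces (p : Fin (n + 2)) :
      cubeSum (n + 1) (fun k =>
          coinvClass G (dMmer (n + 1) p (twistedTuple φ (boolPow g k) m))) =
        psiG φ n (of (dGdel (n + 1) p g, dMmer (n + 1) p m)) -
          psiG φ n (of (dGconj (n + 1) p g, dMconj φ (n + 1) p g m)) := by
    rcases eq_or_ne p 0 with rfl | hp
    · rw [cubeSum_coinvClass_dMmer_zero hφ, psiG_dMconj_zero hφ, sub_self]
    · exact cubeSum_coinvClass_dMmer_of_ne_zero hφ hp g m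
  calc
    psiG φ n (dBRU φ (n + 1) (of (g, m))) =
        ∑ p : Fin (n + 2), (-1 : ℤ) ^ (p : ℕ) •
          cubeSum (n + 1) (fun k =>
            coinvClass G (dMmer (n + 1) p (twistedTuple φ (boolPow g k) m))) := by
      simp only [psiG_dBRU_of, faces]
    _ = QuotientAddGroup.mk' _ (dgp (n + 1) (psiFree φ (n + 1) (of (g, m)))) := by
      rw [mk_dgp_psiFree_of, cubeSum_coinvClass_castSucc, smul_zero, add_zero]

end GAlex
end

section
/- The family γ = (γ_n) is a chain map from the birack chain complex with X-set X, C^{BR}_*(X;ℤ)_X, to C^{BR_U}_*(X;ℤ)_X, i.e. γ_{n−1} ∘ ∂^{BR}_n = ∂^{BR_U}_n ∘ γ_n for every integer n, and each γ_n is an isomorphism of abelian groups. -/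
open FreeAbelianGroup
open scoped TensorProduct

namespace GAlex

variable {G M A : Type*} [Group G] [AddCommGroup M] [DistribMulAction Gᵐᵒᵖ M] [AddCommGroup A]

variable (φ : G →* G)

/-!
On free generators `γ` is a bijection of cells: it separates the group and module coordinates and
replaces the module coordinates by their consecutive differences, which tail sums undo.

Every face of the module coordinates, deleted or twisted, has the same shape for a pair of additive
maps `α`, `β`: entries before `p` go to `α m + (β m_p - α m_p)`, entries after `p` go to `β m`.
Deletion is `α = β = id`; the biquandle face is `α = (· g_p)`, `β = (· φ(g_p))`. In consecutive
differences the common summand `β m_p - α m_p` cancels, except in the difference taken across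
position `p`, which becomes the merged entry `α (m_{p-1} - m_p) + β (m_p - m_{p+1})`.
-/

section ConsecutiveDifferences

variable {N : Type*} {n : ℕ}

section Zero

variable [Zero N]

/-- The sequence `(x₁, …, x_{n-1}, 0)` obtained from `(x₀, …, x_{n-1})` by shifting left and
padding with zero. -/
def leftShift (x : Fin n → N) (j : Fin n) : N :=
  if h : (j : ℕ) + 1 < n then x ⟨j + 1, h⟩ else 0

theorem leftShift_of_lt (x : Fin n → N) {j : Fin n} (h : (j : ℕ) + 1 < n) :
    leftShift x j = x ⟨j + 1, h⟩ :=
  dif_pos h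

theorem leftShift_of_le (x : Fin n → N) {j : Fin n} (h : n ≤ j + 1) : leftShift x j = 0 :=
  dif_neg h.not_gt

theorem leftShift_castSucc (x : Fin (n + 1) → N) (j : Fin n) :
    leftShift x j.castSucc = x j.succ :=
  leftShift_of_lt x (Nat.succ_lt_succ j.isLt)

end Zero

section AddCommMonoid

variable [AddCommMonoid N]

/-- The tail sums `y_j + ⋯ + y_{n-1}`; they invert consecutive differences. -/
def tailSum (y : Fin n → N) (j : Fin n) : N := ∑ i ∈ Finset.Ici j, y i

theorem sum_Ioi_eq_leftShift_tailSum (y : Fin n → N) (j : Fin n) :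
    ∑ i ∈ Finset.Ioi j, y i = leftShift (tailSum y) j := by
  rcases lt_or_ge ((j : ℕ) + 1) n with h | h
  · have hIoi : Finset.Ioi j = Finset.Ici ⟨j + 1, h⟩ := by
      ext i
      rw [Finset.mem_Ioi, Finset.mem_Ici, Fin.lt_def, Fin.le_def, Nat.succ_le_iff]
    rw [leftShift_of_lt _ h, hIoi, tailSum]
  · have hIoi : Finset.Ioi j = ∅ := by
      ext i
      simp only [Finset.mem_Ioi, Fin.lt_def, Finset.notMem_empty, iff_false]
      omega
    rw [leftShift_of_le _ h, hIoi, Finset.sum_empty]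

theorem tailSum_eq_add_leftShift (y : Fin n → N) (j : Fin n) :
    tailSum y j = y j + leftShift (tailSum y) j := by
  rw [← sum_Ioi_eq_leftShift_tailSum, Finset.add_sum_Ioi_eq_sum_Ici, tailSum]

end AddCommMonoid

variable [AddCommGroup N]

/-- The consecutive differences `(x₀ - x₁, …, x_{n-2} - x_{n-1}, x_{n-1})`: the module coordinates
of `γ`. -/
def consecDiff (x : Fin n → N) (j : Fin n) : N := x j - leftShift x j

theorem consecDiff_tailSum (y : Fin n → N) : consecDiff (tailSum y) = y :=
  funext fun j => sub_eq_of_eq_add (tailSum_eq_add_leftShift y j)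

theorem tailSum_consecDiff_apply (x : Fin n → N) (j : Fin n) : tailSum (consecDiff x) j = x j := by
  have hshift : leftShift (tailSum (consecDiff x)) j = leftShift x j := by
    rcases lt_or_ge ((j : ℕ) + 1) n with h | h
    · rw [leftShift_of_lt _ h, leftShift_of_lt _ h, tailSum_consecDiff_apply x ⟨j + 1, h⟩]
    · rw [leftShift_of_le _ h, leftShift_of_le _ h]
  rw [tailSum_eq_add_leftShift, hshift, consecDiff, sub_add_cancel]
termination_by n - j

/-- Passing to consecutive differences, as a bijection. -/
def consecDiffEquiv (N : Type*) [AddCommGroup N] (n : ℕ) : (Fin n → N) ≃ (Fin n → N) where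
  toFun := consecDiff
  invFun := tailSum
  left_inv x := funext (tailSum_consecDiff_apply x)
  right_inv := consecDiff_tailSum

/-- The bijection of free generators underlying `γ_n`. -/
def cellEquiv (N S : Type*) [AddCommGroup N] (n : ℕ) :
    (Fin n → N × S) ≃ (Fin n → S) × (Fin n → N) :=
  (Equiv.arrowProdEquivProdArrow (Fin n) (fun _ => N) fun _ => S).trans <|
    (Equiv.prodComm _ _).trans <| Equiv.prodCongr (Equiv.refl _) (consecDiffEquiv N n)

theorem gammaMap_of {S : Type*} (x : Fin n → N × S) : gammaMap n (of x) = of (cellEquiv N S n x) :=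
  lift_apply_of _ _

theorem gammaMap_bijective {S : Type*} (n : ℕ) :
    Function.Bijective (gammaMap (G := S) (M := N) n) :=
  (equivOfEquiv (cellEquiv N S n)).bijective

end ConsecutiveDifferences

section TwistedFaces

variable {N P : Type*} [AddCommGroup N] [AddCommGroup P] {n : ℕ}

/-- The face at `p` of a sequence in a module, for additive maps `α` and `β`: the common form of
deletion and of the module coordinates of a biquandle face. -/
def twistedFace (α β : N →+ P) (p : Fin (n + 1)) (x : Fin (n + 1) → N) : Fin n → P :=
  fun j => if (j : ℕ) < p then α (x j.castSucc) + β (x p) - α (x p) else β (x j.succ)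

/-- The face at `p` in consecutive differences, merging the entries `p - 1` and `p`: the common form
of `dMmer` and `dMconj`. -/
def twistedMerge (α β : N →+ P) (p : Fin (n + 1)) (y : Fin (n + 1) → N) : Fin n → P :=
  fun j =>
    if (j : ℕ) + 1 < p then α (y j.castSucc)
    else if (j : ℕ) + 1 = p then α (y j.castSucc) + β (y j.succ)
    else β (y j.succ)

variable (α β : N →+ P) {p : Fin (n + 1)} (x : Fin (n + 1) → N) {j : Fin n}

theorem leftShift_twistedFace_of_lt (h : (j : ℕ) + 1 < p) :
    leftShift (twistedFace α β p x) j = α (x j.succ) + β (x p) - α (x p) := by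
  have hn : (j : ℕ) + 1 < n := by omega
  rw [leftShift_of_lt _ hn]
  exact if_pos h

theorem leftShift_twistedFace_of_le (h : (p : ℕ) ≤ j + 1) :
    leftShift (twistedFace α β p x) j = β (leftShift x j.succ) := by
  rcases lt_or_ge ((j : ℕ) + 1) n with hn | hn
  · rw [leftShift_of_lt _ hn, leftShift_of_lt x (j := j.succ) (Nat.succ_lt_succ hn)]
    exact if_neg h.not_gt
  · rw [leftShift_of_le _ hn, leftShift_of_le x (j := j.succ) (Nat.succ_le_succ hn), map_zero]

theorem consecDiff_twistedFace (p : Fin (n + 1)) :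
    consecDiff (twistedFace α β p x) = twistedMerge α β p (consecDiff x) := by
  funext j
  rcases lt_trichotomy ((j : ℕ) + 1) p with hlt | heq | hgt
  · rw [consecDiff, leftShift_twistedFace_of_lt α β x hlt, twistedFace, if_pos (by omega),
      twistedMerge, if_pos hlt, consecDiff, leftShift_castSucc, map_sub]
    abel
  · obtain rfl : j.succ = p := Fin.ext heq
    rw [consecDiff, leftShift_twistedFace_of_le α β x heq.ge, twistedFace, if_pos (by omega),
      twistedMerge, if_neg heq.not_lt, if_pos heq, consecDiff, consecDiff, leftShift_castSucc,
      map_sub, map_sub]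
    abel
  · rw [consecDiff, leftShift_twistedFace_of_le α β x hgt.le, twistedFace, if_neg (by omega),
      twistedMerge, if_neg hgt.not_gt, if_neg hgt.ne', consecDiff, map_sub]

theorem twistedFace_id (p : Fin (n + 1)) :
    twistedFace (.id N) (.id N) p x = fun j => x (p.succAbove j) := by
  funext j
  simp only [twistedFace, AddMonoidHom.id_apply, add_sub_cancel_right, Fin.succAbove, Fin.lt_def,
    Fin.val_castSucc, apply_ite x]

end TwistedFaces

theorem cellEquiv_comp_succAbove {N S : Type*} [AddCommGroup N] {n : ℕ} (p : Fin (n + 1))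
    (x : Fin (n + 1) → N × S) :
    cellEquiv N S n (fun j => x (p.succAbove j)) =
      (dGdel n p (cellEquiv N S (n + 1) x).1, dMmer n p (cellEquiv N S (n + 1) x).2) := by
  refine Prod.ext rfl ?_
  change consecDiff (fun j => (x (p.succAbove j)).1) = _
  rw [← twistedFace_id (fun j => (x j).1), consecDiff_twistedFace]
  rfl

/-- The subtracted face `(x₀ ⊳ x_p, …, x_{p-1} ⊳ x_p, x_{p+1} ⊚ x_p, …)` of the birack boundary. -/
def birackFace {n : ℕ} (p : Fin (n + 1)) (x : Fin (n + 1) → M × G) : Fin n → M × G :=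
  fun j => if (j : ℕ) < p then under φ (x j.castSucc) (x p) else overOp φ (x j.succ) (x p)

theorem birackFace_fst {n : ℕ} (p : Fin (n + 1)) (x : Fin (n + 1) → M × G) :
    (fun j => (birackFace φ p x j).1) =
      twistedFace (DistribSMul.toAddMonoidHom M (MulOpposite.op (x p).2))
        (DistribSMul.toAddMonoidHom M (MulOpposite.op (φ (x p).2))) p fun j => (x j).1 :=
  funext fun _ => apply_ite Prod.fst _ _ _

theorem birackFace_snd {n : ℕ} (p : Fin (n + 1)) (x : Fin (n + 1) → M × G) :
    (fun j => (birackFace φ p x j).2) = dGconj n p fun j => (x j).2 :=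
  funext fun _ => apply_ite Prod.snd _ _ _

theorem cellEquiv_birackFace {n : ℕ} (p : Fin (n + 1)) (x : Fin (n + 1) → M × G) :
    cellEquiv M G n (birackFace φ p x) =
      (dGconj n p (cellEquiv M G (n + 1) x).1,
        dMconj φ n p (cellEquiv M G (n + 1) x).1 (cellEquiv M G (n + 1) x).2) := by
  refine Prod.ext (birackFace_snd φ p x) ?_
  change consecDiff (fun j => (birackFace φ p x j).1) = _
  rw [birackFace_fst, consecDiff_twistedFace]
  rfl

theorem dBRX_succ_of (d : ℕ) (x : Fin (d + 3) → M × G) :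
    dBRX φ (d + 1) (of x) =
      ∑ i : Fin (d + 2), (-1 : ℤ) ^ (i : ℕ) •
        (of (fun j => x (i.succ.succAbove j)) - of (birackFace φ i.succ x)) :=
  lift_apply_of _ _

theorem dBRUX_succ_of (d : ℕ) (c : (Fin (d + 3) → G) × (Fin (d + 3) → M)) :
    dBRUX φ (d + 1) (of c) =
      ∑ i : Fin (d + 2), (-1 : ℤ) ^ (i : ℕ) •
        (of (dGdel (d + 2) i.succ c.1, dMmer (d + 2) i.succ c.2) -
          of (dGconj (d + 2) i.succ c.1, dMconj φ (d + 2) i.succ c.1 c.2)) :=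
  lift_apply_of _ _

theorem gammaMap_comp_dBRX (d : ℕ) :
    (gammaMap (G := G) (M := M) (d + 1)).comp (dBRX φ d) =
      (dBRUX φ d).comp (gammaMap (d + 2)) := by
  cases d with
  | zero => simp only [dBRX, dBRUX, AddMonoidHom.comp_zero, AddMonoidHom.zero_comp]
  | succ d =>
    refine lift_ext _ _ fun x => ?_
    simp only [AddMonoidHom.comp_apply, dBRX_succ_of, dBRUX_succ_of, map_sum, map_zsmul, map_sub,
      gammaMap_of, cellEquiv_comp_succAbove, cellEquiv_birackFace]

theorem gammaX_chainMap_and_iso_general :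
    (∀ d : ℕ,
        (gammaMap (G := G) (M := M) (d + 1)).comp (dBRX φ d) =
          (dBRUX (M := M) φ d).comp (gammaMap (d + 2))) ∧
      (∀ n : ℕ, Function.Bijective (gammaMap (G := G) (M := M) n)) :=
  ⟨gammaMap_comp_dBRX φ, gammaMap_bijective⟩

/-- `γ = (γ_n)` is a chain map `C^{BR}_*(X;ℤ)_X → C^{BR_U}_*(X;ℤ)_X`
(the `X`-set `X` versions), and each `γ_n` is an isomorphism of abelian groups. -/
theorem gammaX_chainMap_and_iso (hφ : ∀ g : G, φ g ∈ Subgroup.center G) :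
    (∀ d : ℕ,
        (gammaMap (G := G) (M := M) (d + 1)).comp (dBRX φ d) =
          (dBRUX (M := M) φ d).comp (gammaMap (d + 2))) ∧
      (∀ n : ℕ, Function.Bijective (gammaMap (G := G) (M := M) n)) :=
  gammaX_chainMap_and_iso_general φ

end GAlex
end
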